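/- arXiv:0906.1546 — 2 statements merged into one kernel-verified Lean document; each statement's English description precedes it below -/
import Mathlib

section
/- Let a, b, x, y, X, z, w, g be complex numbers such that: z, g, g − i, z − b, z + b, z − x, z + x, z − y, z + y, z − X, z + X, z² − 1, z² − a², w are all nonzero; w² = (b + z)(x − z)(y + z) / ((b − z)(x + z)(y − z)); w(X − z)(g + i) = (X + z)(g − i); and z(z⁴ + S₂z² + S₄) ≠ 0. Then (i/2)(1/g + g) · [ z(z⁴ + S₂z² + S₄) / ((z − b)(z − y)(z + x)(z² − 1)(z² − a²)·w) ] = (X² − z²) / ((1 − z²)(z² − a²)). -/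
/-!
Write `Q(t) = (b - t)(x + t)(y - t)`, so that the curve is `w² Q(z) = Q(-z)`. The odd part of
`(X + t)² Q(t)` is `t (t⁴ + S₂ t² + S₄)`; this is what the coefficients `S₂`, `S₄` encode, and it
is `odd_part`. Solving the Gauss map relation with `u = (X + z) / (X - z)` gives
`(i/2)(1/g + g) = -2 u w / (u² - w²)`, in which `u² - w²` is, up to the factor `(X - z)² Q(z)`,
twice that odd part at `z`. Hence the numerator of `dh` cancels, and so does `w`. Below, this is
carried out in the polynomial form `gauss_numerator`, using `(g + i)² - (g - i)² = 4 i g` and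
`(g + i)(g - i) = g² + 1`.
-/

open Complex

/-- S₂ as a function of the parameters b, x, y, X. -/
noncomputable def S₂ (b x y X : ℂ) : ℂ :=
  b * y - b * x - x * y + 2 * (x - b - y) * X + X ^ 2

/-- S₄ as a function of the parameters b, x, y, X. -/
noncomputable def S₄ (b x y X : ℂ) : ℂ :=
  2 * b * x * y * X + (b * y - b * x - x * y) * X ^ 2

/-- Twice the odd part of `(X + z)² Q(z)` in `z`, where `Q(z) = (b - z)(x + z)(y - z)`. -/
lemma odd_part (b x y X z : ℂ) :
    (X + z) ^ 2 * ((b - z) * (x + z) * (y - z)) - (X - z) ^ 2 * ((b + z) * (x - z) * (y + z))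
      = 2 * (z * (z ^ 4 + S₂ b x y X * z ^ 2 + S₄ b x y X)) := by
  unfold S₂ S₄
  ring

/-- The rotated Gauss map factor with denominators cleared. Here `Q` and `P` stand for the
denominator and numerator of `w²`, and `N` for the numerator of the height differential. -/
lemma gauss_numerator {X z w g P Q N : ℂ} (hgi : g - I ≠ 0) (hww : w ^ 2 * Q = P)
    (hgw : w * (X - z) * (g + I) = (X + z) * (g - I))
    (hN : (X + z) ^ 2 * Q - (X - z) ^ 2 * P = 2 * N) :
    I / 2 * (1 + g ^ 2) * N = -((X ^ 2 - z ^ 2) * g * Q * w) := by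
  subst hww
  -- The relation `hgw` turns both sides into multiples of `g + I` after multiplying by `g - I`.
  refine mul_right_cancel₀ hgi ?_
  have hsq : (X - z) ^ 2 * (w ^ 2 * Q) * (g + I) ^ 2 = (X + z) ^ 2 * Q * (g - I) ^ 2 := by
    linear_combination Q * (w * (X - z) * (g + I) + (X + z) * (g - I)) * hgw
  have hβ : (g - I) ^ 2 * N = (X - z) ^ 2 * (w ^ 2 * Q) * (2 * I * g) := by
    linear_combination -(g - I) ^ 2 / 2 * hN - hsq / 2
  have hfac : 1 + g ^ 2 = (g + I) * (g - I) := by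
    linear_combination I_sq
  rw [hfac]
  linear_combination I / 2 * (g + I) * hβ - (X - z) * g * Q * w * hgw
    + (X - z) ^ 2 * w ^ 2 * Q * g * (g + I) * I_sq

/-- The rotated height differential dH = (i/2)(1/g + g)·dh is the rational function
(X² − z²)/((1 − z²)(z² − a²)) of z alone (equation (13) of the paper). -/
theorem rotated_height_differential (a b x y X z w g : ℂ)
    (hz : z ≠ 0) (hg : g ≠ 0) (hgi : g - I ≠ 0)
    (hzb : z - b ≠ 0) (hzb' : z + b ≠ 0) (hzx : z - x ≠ 0) (hzx' : z + x ≠ 0)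
    (hzy : z - y ≠ 0) (hzy' : z + y ≠ 0) (hzX : z - X ≠ 0) (hzX' : z + X ≠ 0)
    (hz1 : z ^ 2 - 1 ≠ 0) (hza : z ^ 2 - a ^ 2 ≠ 0) (hw : w ≠ 0)
    (hww : w ^ 2 = (b + z) * (x - z) * (y + z) / ((b - z) * (x + z) * (y - z)))
    (hgw : w * (X - z) * (g + I) = (X + z) * (g - I))
    (hnum : z * (z ^ 4 + S₂ b x y X * z ^ 2 + S₄ b x y X) ≠ 0) :
    I / 2 * (1 / g + g)
        * (z * (z ^ 4 + S₂ b x y X * z ^ 2 + S₄ b x y X)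
            / ((z - b) * (z - y) * (z + x) * (z ^ 2 - 1) * (z ^ 2 - a ^ 2) * w))
      = (X ^ 2 - z ^ 2) / ((1 - z ^ 2) * (z ^ 2 - a ^ 2)) := by
  have hzb₁ : b - z ≠ 0 := fun h => hzb (by linear_combination -h)
  have hzy₁ : y - z ≠ 0 := fun h => hzy (by linear_combination -h)
  have hzx₁ : x + z ≠ 0 := fun h => hzx' (by linear_combination h)
  have hz₁ : 1 - z ^ 2 ≠ 0 := fun h => hz1 (by linear_combination -h)
  have hcurve : w ^ 2 * ((b - z) * (x + z) * (y - z)) = (b + z) * (x - z) * (y + z) := by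
    rw [hww]
    field_simp
  have key := gauss_numerator hgi hcurve hgw (odd_part b x y X z)
  have hfactor : I / 2 * (1 / g + g) = I / 2 * (1 + g ^ 2) / g := by
    field_simp
  have hden : (z - b) * (z - y) * (z + x) * (z ^ 2 - 1) * (z ^ 2 - a ^ 2) * w ≠ 0 := by
    simp [hzb, hzy, hzx', hz1, hza, hw]
  rw [hfactor, div_mul_div_comm, div_eq_div_iff (mul_ne_zero hg hden) (mul_ne_zero hz₁ hza)]
  linear_combination (1 - z ^ 2) * (z ^ 2 - a ^ 2) * key
end

section
/- Let a, b, x, y, X, z, w, g be complex numbers such that: z, g, g − i, z − b, z + b, z − x, z + x, z − y, z + y, z − X, z + X, z² − 1, z² − a², w are all nonzero; w² = (b + z)(x − z)(y + z) / ((b − z)(x + z)(y − z)); w(X − z)(g + i) = (X + z)(g − i); and z(z⁴ + S₂z² + S₄) ≠ 0. Then (1/2)(1/g − g) · [ z(z⁴ + S₂z² + S₄) / ((z − b)(z − y)(z + x)(z² − 1)(z² − a²)·w) ] = −i(S₁z⁴ + S₃z² + S₅) / ((z − b)(z − y)(z + x)(z² − 1)(z² − a²)·w). -/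
/-!
Write `P = (b + z)(x - z)(y + z)` and `Q = (b - z)(x + z)(y - z)`, so that `w² = P / Q`. Squaring
the equation that determines `g` and eliminating `w` gives
`P (X - z)² (g + i)² = Q (X + z)² (g - i)²`.
The polynomials `Q (X + z)²` and `P (X - z)²` are exchanged by `z ↦ -z`, hence equal `E + O` and
`E - O`, where the even part is `E = S₁z⁴ + S₃z² + S₅` and the odd part is `O = z(z⁴ + S₂z² + S₄)`.
Expanding the squares in `g` then gives `(1 - g²) O = -2 i g E`, that is, `(1/2)(1/g - g) O = -i E`.
-/

open Complex

/-- S₁ as a function of the parameters b, x, y, X. -/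
noncomputable def S₁ (b x y X : ℂ) : ℂ := x + 2 * X - b - y

/-- S₃ as a function of the parameters b, x, y, X. -/
noncomputable def S₃ (b x y X : ℂ) : ℂ :=
  b * x * y + 2 * (b * y - b * x - x * y) * X + (x - b - y) * X ^ 2

/-- S₅ as a function of the parameters b, x, y, X. -/
noncomputable def S₅ (b x y X : ℂ) : ℂ := b * x * y * X ^ 2

/-- The first Weierstraß form φ₁ = (1/2)(1/g − g)dh equals
−i(S₁z⁴ + S₃z² + S₅)dz/((z − b)(z − y)(z + x)(z² − 1)(z² − a²)w), underlying formula (7)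
for the period integral I. -/
theorem first_weierstrass_form (a b x y X z w g : ℂ)
    (hz : z ≠ 0) (hg : g ≠ 0) (hgi : g - I ≠ 0)
    (hzb : z - b ≠ 0) (hzb' : z + b ≠ 0) (hzx : z - x ≠ 0) (hzx' : z + x ≠ 0)
    (hzy : z - y ≠ 0) (hzy' : z + y ≠ 0) (hzX : z - X ≠ 0) (hzX' : z + X ≠ 0)
    (hz1 : z ^ 2 - 1 ≠ 0) (hza : z ^ 2 - a ^ 2 ≠ 0) (hw : w ≠ 0)
    (hww : w ^ 2 = (b + z) * (x - z) * (y + z) / ((b - z) * (x + z) * (y - z)))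
    (hgw : w * (X - z) * (g + I) = (X + z) * (g - I))
    (hnum : z * (z ^ 4 + S₂ b x y X * z ^ 2 + S₄ b x y X) ≠ 0) :
    1 / 2 * (1 / g - g)
        * (z * (z ^ 4 + S₂ b x y X * z ^ 2 + S₄ b x y X)
            / ((z - b) * (z - y) * (z + x) * (z ^ 2 - 1) * (z ^ 2 - a ^ 2) * w))
      = -I * (S₁ b x y X * z ^ 4 + S₃ b x y X * z ^ 2 + S₅ b x y X)
          / ((z - b) * (z - y) * (z + x) * (z ^ 2 - 1) * (z ^ 2 - a ^ 2) * w) := by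
  have hbz : b - z ≠ 0 := sub_ne_zero.2 (sub_ne_zero.1 hzb).symm
  have hyz : y - z ≠ 0 := sub_ne_zero.2 (sub_ne_zero.1 hzy).symm
  have hxz : x + z ≠ 0 := by rwa [add_comm]
  rw [eq_div_iff (mul_ne_zero (mul_ne_zero hbz hxz) hyz)] at hww
  have hsq : (b + z) * (x - z) * (y + z) * (X - z) ^ 2 * (g + I) ^ 2
      = (b - z) * (x + z) * (y - z) * (X + z) ^ 2 * (g - I) ^ 2 := by
    rw [← hww]
    linear_combination ((b - z) * (x + z) * (y - z))
      * (w * (X - z) * (g + I) + (X + z) * (g - I)) * hgw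
  set E := S₁ b x y X * z ^ 4 + S₃ b x y X * z ^ 2 + S₅ b x y X with hE
  set O := z * (z ^ 4 + S₂ b x y X * z ^ 2 + S₄ b x y X) with hO
  have hplus : (b - z) * (x + z) * (y - z) * (X + z) ^ 2 = E + O := by
    simp only [hE, hO, S₁, S₂, S₃, S₄, S₅]; ring
  have hminus : (b + z) * (x - z) * (y + z) * (X - z) ^ 2 = E - O := by
    simp only [hE, hO, S₁, S₂, S₃, S₄, S₅]; ring
  rw [hplus, hminus] at hsq
  have key : 1 / 2 * (1 / g - g) * O = -I * E := by
    field_simp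
    linear_combination (1 / 2 : ℂ) * hsq + O * I_sq
  rw [← mul_div_assoc, key]
end
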